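/- Every planar graph G is 1-defective 4-choosable: for every assignment of lists of 4 colours to the vertices, there is a colouring φ with φ(v) ∈ L(v) for all v such that each colour class induces a subgraph of maximum degree at most 1. -/

import Mathlib

open MvPolynomial Finset

/- The graph polynomial `P_G = ∏_{uv ∈ E(G), u < v} (x_v - x_u)`. -/
open scoped Classical in
noncomputable def graphPoly {V : Type*} [Fintype V] [LinearOrder V]
    (G : SimpleGraph V) : MvPolynomial V ℝ :=
  ∏ p ∈ Finset.univ.filter (fun p : V × V => G.Adj p.1 p.2 ∧ p.1 < p.2),
    (X p.2 - X p.1)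

/- The signed graph polynomial `P_{G,σ} = ∏_{uv ∈ E(G), u < v} (x_v - σ(uv)·x_u)`. -/
open scoped Classical in
noncomputable def signedGraphPoly {V : Type*} [Fintype V] [LinearOrder V]
    (G : SimpleGraph V) (σ : Sym2 V → ℤ) : MvPolynomial V ℤ :=
  ∏ p ∈ Finset.univ.filter (fun p : V × V => G.Adj p.1 p.2 ∧ p.1 < p.2),
    (X p.2 - C (σ s(p.1, p.2)) * X p.1)

/- `H` is a minor of `G`: branch sets. -/
def SimpleGraph.IsMinor {W V : Type*} (H : SimpleGraph W) (G : SimpleGraph V) : Prop :=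
  ∃ f : W → Set V,
    (∀ w, (G.induce (f w)).Connected) ∧
    (∀ w₁ w₂, w₁ ≠ w₂ → Disjoint (f w₁) (f w₂)) ∧
    (∀ w₁ w₂, H.Adj w₁ w₂ → ∃ v₁ ∈ f w₁, ∃ v₂ ∈ f w₂, G.Adj v₁ v₂)

/- A graph is planar iff it has no `K₅` and no `K₃,₃` minor (Wagner's theorem). -/
def SimpleGraph.IsPlanar {V : Type*} (G : SimpleGraph V) : Prop :=
  ¬ SimpleGraph.IsMinor (completeGraph (Fin 5)) G ∧
  ¬ SimpleGraph.IsMinor (completeBipartiteGraph (Fin 3) (Fin 3)) G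

/-!
The lists are handled by the polynomial method: a planar graph `G` has a matching `M` such that the
graph polynomial of `G - M` has a monomial in which every exponent is at most `3`, so the
combinatorial Nullstellensatz makes `G - M` `4`-choosable (Grytczuk and Zhu). In a proper colouring
of `G - M`, two neighbours of `v` in `G` with the colour of `v` are both matched to `v`, so they
are equal.

The monomial is found by an induction in the style of Thomassen: remove vertices one after the
other, with smaller exponents allowed on the boundary of the connected removed part `Z`. If no
precoloured vertex or edge on the boundary separates the rest, then a boundary vertex has at most
two boundary neighbours. With three of them, joined pairwise by paths that avoid the third one,
contracting `Z` would produce a `K₅` or a `K₃,₃` minor.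
-/

section MonomialSupport

variable {σ R : Type*} [CommRing R]

lemma add_mem_support_mul [NoZeroDivisors R] {P Q : MvPolynomial σ R} {d e : σ →₀ ℕ}
    (hd : d ∈ P.support) (he : e ∈ Q.support) (hQ : Q.IsHomogeneous e.degree)
    (hPe : ∀ w ∈ P.vars, e w = 0) :
    d + e ∈ (P * Q).support := by
  classical
  have hunique : ∀ b ∈ antidiagonal (d + e), b ≠ (d, e) → coeff b.1 P * coeff b.2 Q = 0 := by
    rintro ⟨d', e'⟩ hb hne
    rw [HasAntidiagonal.mem_antidiagonal] at hb
    by_contra hc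
    have hd' : d' ∈ P.support := mem_support_iff.2 (left_ne_zero_of_mul hc)
    have hle : e ≤ e' := fun w ↦ by
      by_cases hw : w ∈ P.vars
      · simp [hPe w hw]
      · have := DFunLike.congr_fun hb w
        simp only [Finsupp.add_apply, mem_support_notMem_vars_zero hd hw,
          mem_support_notMem_vars_zero hd' hw] at this
        lia
    have hdeg : e'.degree = e.degree := by
      by_contra h
      exact right_ne_zero_of_mul hc (hQ.coeff_eq_zero h)
    obtain ⟨c, rfl⟩ := exists_add_of_le hle
    obtain rfl : c = 0 := by
      rw [← Finsupp.degree_eq_zero_iff]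
      simpa only [map_add, Nat.add_eq_left] using hdeg
    simp_all
  rw [mem_support_iff, coeff_mul, Finset.sum_eq_single (d, e) hunique (by simp)]
  exact mul_ne_zero (mem_support_iff.1 hd) (mem_support_iff.1 he)

lemma exists_mem_support_of_mem_support_X_mul {a : σ} {P : MvPolynomial σ R} {e : σ →₀ ℕ}
    (he : e ∈ (X a * P).support) : ∃ d ∈ P.support, e = d + Finsupp.single a 1 := by
  classical
  rw [support_X_mul] at he
  obtain ⟨d, hd, rfl⟩ := Finset.mem_map.1 he
  exact ⟨d, hd, add_comm _ _⟩

lemma exists_mem_support_of_mem_support_X_sub_X_mul {a b : σ} {P : MvPolynomial σ R}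
    {e : σ →₀ ℕ} (he : e ∈ ((X a - X b) * P).support) :
    ∃ d ∈ P.support, e = d + Finsupp.single a 1 ∨ e = d + Finsupp.single b 1 := by
  classical
  rw [sub_mul] at he
  rcases Finset.mem_union.1 (support_sub _ _ _ he) with h | h
  · obtain ⟨d, hd, rfl⟩ := exists_mem_support_of_mem_support_X_mul h
    exact ⟨d, hd, .inl rfl⟩
  · obtain ⟨d, hd, rfl⟩ := exists_mem_support_of_mem_support_X_mul h
    exact ⟨d, hd, .inr rfl⟩

lemma add_single_mem_support_X_sub_X_mul_or (a b : σ) {P : MvPolynomial σ R} {d : σ →₀ ℕ}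
    (hd : d ∈ P.support) :
    d + Finsupp.single a 1 ∈ ((X a - X b) * P).support ∨
      ∃ e ∈ P.support, d + Finsupp.single a 1 = e + Finsupp.single b 1 := by
  refine or_iff_not_imp_left.2 fun h ↦ exists_mem_support_of_mem_support_X_mul ?_
  have hcancel : coeff (d + Finsupp.single a 1) (X b * P) = coeff d P := by
    rw [notMem_support_iff, sub_mul, coeff_sub, add_comm, coeff_X_mul, sub_eq_zero] at h
    rw [add_comm, ← h]
  rwa [mem_support_iff, hcancel, ← mem_support_iff]

end MonomialSupport

section GraphPolynomial

variable {V : Type*} [Fintype V] [LinearOrder V] {H K : SimpleGraph V}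

lemma graphPoly_sup (h : Disjoint H K) : graphPoly (H ⊔ K) = graphPoly H * graphPoly K := by
  classical
  rw [graphPoly, graphPoly, graphPoly, ← prod_union]
  · congr 1
    ext p
    simp only [mem_union, mem_filter_univ, SimpleGraph.sup_adj]
    tauto
  · rw [Finset.disjoint_left]
    intro p hp hq
    rw [mem_filter_univ] at hp hq
    exact (SimpleGraph.disjoint_left.1 h) _ _ hp.1 hq.1

lemma graphPoly_edge {a b : V} (hab : a < b) : graphPoly (SimpleGraph.edge a b) = X b - X a := by
  classical
  rw [graphPoly, prod_eq_single (a, b)]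
  · grind
  · simp [SimpleGraph.edge_adj, hab, hab.ne]

lemma support_graphPoly_sup_edge {a b : V} (hab : a ≠ b) (h : ¬ H.Adj a b) :
    (graphPoly (H ⊔ SimpleGraph.edge a b)).support = ((X a - X b) * graphPoly H).support := by
  have hdisj : Disjoint H (SimpleGraph.edge a b) := (SimpleGraph.disjoint_edge _).2 h
  rw [graphPoly_sup hdisj, mul_comm]
  rcases hab.lt_or_gt with hlt | hlt
  · rw [graphPoly_edge hlt, ← support_neg, ← neg_mul, neg_sub]
  · rw [SimpleGraph.edge_comm, graphPoly_edge hlt]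

lemma eval_graphPoly_ne_zero_iff {s : V → ℝ} :
    eval s (graphPoly H) ≠ 0 ↔ ∀ a b, H.Adj a b → s a ≠ s b := by
  classical
  simp only [graphPoly, map_prod, prod_ne_zero_iff, mem_filter_univ, map_sub, eval_X, sub_ne_zero,
    Prod.forall]
  refine ⟨fun h a b hab ↦ ?_, fun h a b hab ↦ (h a b hab.1).symm⟩
  rcases hab.ne.lt_or_gt with hlt | hlt
  · exact (h a b ⟨hab, hlt⟩).symm
  · exact h b a ⟨hab.symm, hlt⟩

lemma mem_support_of_mem_vars_graphPoly {v : V} (hv : v ∈ (graphPoly H).vars) : v ∈ H.support := by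
  classical
  obtain ⟨p, hp, hvp⟩ := Finset.mem_biUnion.1 (vars_prod _ hv)
  have hadj : H.Adj p.1 p.2 := (mem_filter.1 hp).2.1
  have hv' := vars_sub_subset _ hvp
  rw [vars_X, vars_X, mem_union, mem_singleton, mem_singleton] at hv'
  rcases hv' with rfl | rfl
  exacts [⟨_, hadj.symm⟩, ⟨_, hadj⟩]

/-- The exponent vectors of the monomials of the graph polynomial of `H`. -/
noncomputable def graphExponents (H : SimpleGraph V) : Finset (V →₀ ℕ) :=
  (graphPoly H).support

variable {d e : V →₀ ℕ} {a b v u : V}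

lemma zero_mem_graphExponents_bot : 0 ∈ graphExponents (⊥ : SimpleGraph V) := by
  simp [graphExponents, graphPoly]

lemma isHomogeneous_graphPoly (hd : d ∈ graphExponents H) :
    (graphPoly H).IsHomogeneous d.degree := by
  classical
  have h : (graphPoly H).IsHomogeneous _ :=
    IsHomogeneous.prod _ _ (fun _ ↦ 1) fun p _ ↦ (isHomogeneous_X ℝ p.2).sub (isHomogeneous_X ℝ p.1)
  rwa [not_ne_iff.1 fun hne ↦ mem_support_iff.1 hd (h.coeff_eq_zero hne)]

lemma graphExponents_apply_eq_zero (hd : d ∈ graphExponents H) (hv : H.IsIsolated v) : d v = 0 := by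
  refine mem_support_notMem_vars_zero hd fun h ↦ ?_
  obtain ⟨w, hw⟩ := mem_support_of_mem_vars_graphPoly h
  exact hv w hw

lemma add_mem_graphExponents_sup (hHK : Disjoint H K) (hd : d ∈ graphExponents H)
    (he : e ∈ graphExponents K) (h : ∀ v ∈ H.support, e v = 0) :
    d + e ∈ graphExponents (H ⊔ K) := by
  rw [graphExponents, graphPoly_sup hHK]
  exact add_mem_support_mul hd he (isHomogeneous_graphPoly he)
    fun v hv ↦ h v (mem_support_of_mem_vars_graphPoly hv)

lemma exists_mem_graphExponents_of_mem_sup_edge (hab : a ≠ b) (h : ¬ H.Adj a b)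
    (he : e ∈ graphExponents (H ⊔ SimpleGraph.edge a b)) :
    ∃ d ∈ graphExponents H, e = d + Finsupp.single a 1 ∨ e = d + Finsupp.single b 1 := by
  rw [graphExponents, support_graphPoly_sup_edge hab h] at he
  exact exists_mem_support_of_mem_support_X_sub_X_mul he

lemma add_single_mem_graphExponents_sup_edge_or (hab : a ≠ b) (h : ¬ H.Adj a b)
    (hd : d ∈ graphExponents H) :
    d + Finsupp.single a 1 ∈ graphExponents (H ⊔ SimpleGraph.edge a b) ∨
      ∃ e ∈ graphExponents H, d + Finsupp.single a 1 = e + Finsupp.single b 1 := by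
  rw [graphExponents, support_graphPoly_sup_edge hab h]
  exact add_single_mem_support_X_sub_X_mul_or a b hd

lemma add_single_mem_graphExponents_sup_edge (hab : a ≠ b) (h : ¬ H.Adj a b)
    (hd : d ∈ graphExponents H) (hb : d b = 0) :
    d + Finsupp.single a 1 ∈ graphExponents (H ⊔ SimpleGraph.edge a b) := by
  refine (add_single_mem_graphExponents_sup_edge_or hab h hd).resolve_right ?_
  rintro ⟨e, -, hde⟩
  simpa [hb, hab] using DFunLike.congr_fun hde b

end GraphPolynomial

section Star

variable {V : Type*} {F : Finset V} {a b v : V}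

/-- The star with centre `v` and set of leaves `F \ {v}`. -/
def starAt (v : V) (F : Finset V) : SimpleGraph V :=
  SimpleGraph.fromRel fun a b ↦ a = v ∧ b ∈ F

lemma starAt_adj : (starAt v F).Adj a b ↔ a ≠ b ∧ (a = v ∧ b ∈ F ∨ b = v ∧ a ∈ F) := by
  rw [starAt, SimpleGraph.fromRel_adj]

lemma starAt_empty : starAt v ∅ = ⊥ := by
  ext
  simp [starAt_adj]

lemma starAt_insert [DecidableEq V] :
    starAt v (insert a F) = starAt v F ⊔ SimpleGraph.edge v a := by
  ext
  simp only [starAt_adj, SimpleGraph.sup_adj, mem_insert]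
  grind

/-- The exponent vector of the squarefree monomial `∏ p ∈ F, x_p`. -/
noncomputable def ones (F : Finset V) : V →₀ ℕ :=
  ∑ p ∈ F, Finsupp.single p 1

lemma ones_apply [DecidableEq V] (F : Finset V) (w : V) : ones F w = if w ∈ F then 1 else 0 := by
  simp [ones, Finsupp.single_apply]

lemma ones_insert [DecidableEq V] (h : a ∉ F) :
    ones (insert a F) = ones F + Finsupp.single a 1 := by
  rw [ones, sum_insert h, add_comm, ones]

end Star

section StarExponents

variable {V : Type*} [Fintype V] [LinearOrder V] {H : SimpleGraph V} {d e : V →₀ ℕ}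
  {F : Finset V} {u v : V}

lemma add_ones_mem_graphExponents_sup_starAt (hv : H.IsIsolated v) (hF : v ∉ F)
    (hd : d ∈ graphExponents H) : d + ones F ∈ graphExponents (H ⊔ starAt v F) := by
  induction F using Finset.induction_on with
  | empty => simpa [starAt_empty, ones] using hd
  | insert p F hp ih =>
    obtain ⟨hvp, hvF⟩ : v ≠ p ∧ v ∉ F := by simpa using hF
    rw [ones_insert hp, starAt_insert, ← sup_assoc, ← add_assoc, SimpleGraph.edge_comm]
    refine add_single_mem_graphExponents_sup_edge hvp.symm ?_ (ih hvF) ?_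
    · simp [starAt_adj, hp, hvp.symm, H.adj_comm p v, hv p]
    · simp [ones_apply, hvF, graphExponents_apply_eq_zero hd hv]

lemma exists_of_mem_graphExponents_sup_starAt (hv : H.IsIsolated v) (hF : v ∉ F)
    (he : e ∈ graphExponents (H ⊔ starAt v F)) :
    ∃ T ⊆ F, ∃ d ∈ graphExponents H, e + ones T = d + ones F + Finsupp.single v #T := by
  induction F using Finset.induction_on generalizing e with
  | empty => exact ⟨∅, Subset.rfl, e, by simpa [starAt_empty] using he, by simp [ones]⟩
  | insert p F hp ih =>
    obtain ⟨hvp, hvF⟩ : v ≠ p ∧ v ∉ F := by simpa using hF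
    rw [starAt_insert, ← sup_assoc] at he
    have hadj : ¬ (H ⊔ starAt v F).Adj v p := by simp [starAt_adj, hp, hvp, hvp.symm, hv p]
    obtain ⟨e', he', h⟩ := exists_mem_graphExponents_of_mem_sup_edge hvp hadj he
    obtain ⟨T, hTF, d, hd, hT⟩ := ih hvF he'
    rw [ones_insert hp]
    rcases h with rfl | rfl
    · have hpT : p ∉ T := fun h ↦ hp (hTF h)
      refine ⟨insert p T, insert_subset_insert p hTF, d, hd, ?_⟩
      rw [ones_insert hpT, card_insert_of_notMem hpT, Finsupp.single_add, add_add_add_comm, hT]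
      abel
    · exact ⟨T, hTF.trans (subset_insert p F), d, hd, by rw [add_right_comm, hT]; abel⟩

lemma exchange_graphExponents_sup_starAt {N : Finset V} (hv : H.IsIsolated v)
    (hvN : v ∉ insert u N) (hu : u ∉ N) (hd : d ∈ graphExponents H) :
    d + ones N + Finsupp.single v 1 ∈ graphExponents (H ⊔ starAt v (insert u N)) ∨
      ∃ i ∈ N,
        d + ones N + Finsupp.single i 1 ∈ graphExponents (H ⊔ starAt v (insert u N)) ∧
        d + ones N ∈ graphExponents (H ⊔ starAt v ((insert u N).erase i)) := by
  obtain ⟨hvu, hvN'⟩ : v ≠ u ∧ v ∉ N := by simpa using hvN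
  have hadj : ¬ (H ⊔ starAt v N).Adj v u := by simp [starAt_adj, hu, hvu, hvu.symm, hv u]
  have hdN := add_ones_mem_graphExponents_sup_starAt hv hvN' hd
  rw [starAt_insert, ← sup_assoc]
  refine (add_single_mem_graphExponents_sup_edge_or hvu hadj hdN).imp_right ?_
  rw [sup_assoc, ← starAt_insert]
  rintro ⟨e, he, hde⟩
  obtain ⟨T, hTN, d', hd', hT⟩ := exists_of_mem_graphExponents_sup_starAt hv hvN' he
  obtain ⟨i, rfl⟩ : ∃ i, T = {i} := by
    have hev := DFunLike.congr_fun hde v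
    have hTv := DFunLike.congr_fun hT v
    have hvT : v ∉ T := fun h ↦ hvN' (hTN h)
    simp only [Finsupp.add_apply, Finsupp.single_apply, ones_apply, hvN', hvT, hvu.symm,
      graphExponents_apply_eq_zero hd hv, graphExponents_apply_eq_zero hd' hv, if_true, if_false]
      at hev hTv
    exact card_eq_one.1 (by lia)
  have hi : i ∈ N := hTN (mem_singleton_self i)
  have htrade : d + Finsupp.single i 1 = d' + Finsupp.single u 1 := by
    refine add_right_cancel (b := ones N + Finsupp.single v 1) ?_
    calc _ = d + ones N + Finsupp.single v 1 + Finsupp.single i 1 := by abel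
      _ = e + ones {i} + Finsupp.single u 1 := by rw [hde, ones, sum_singleton]; abel
      _ = _ := by rw [hT, card_singleton]; abel
  refine ⟨i, hi, ?_, ?_⟩
  · have hd'N := add_ones_mem_graphExponents_sup_starAt hv hvN hd'
    rwa [ones_insert hu, add_left_comm, ← htrade, add_left_comm, ← add_assoc] at hd'N
  · have hones : d + ones N = d' + ones ((insert u N).erase i) := by
      refine add_right_cancel (b := Finsupp.single i 1) ?_
      rw [add_assoc d', ← ones_insert (notMem_erase i _),
        insert_erase (mem_insert_of_mem hi), ones_insert hu, add_right_comm, htrade]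
      abel
    rw [hones]
    exact add_ones_mem_graphExponents_sup_starAt hv (mt mem_of_mem_erase hvN) hd'

end StarExponents

section Choosability

variable {V : Type*} {H : SimpleGraph V} {k : ℕ}

/-- `H` is `k`-choosable: it has a proper colouring from any lists of at least `k` colours.
The lists are taken in types of a fixed universe `w`. -/
def IsChoosable.{w} (H : SimpleGraph V) (k : ℕ) : Prop :=
  ∀ (α : Type w) (L : V → Finset α), (∀ v, k ≤ #(L v)) → ∃ C : H.Coloring α, ∀ v, C v ∈ L v

variable [Fintype V] [LinearOrder V] {d : V →₀ ℕ}

lemma exists_coloring_real_of_mem_graphExponents (hd : d ∈ graphExponents H) {L : V → Finset ℝ}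
    (hL : ∀ v, d v < #(L v)) : ∃ C : H.Coloring ℝ, ∀ v, C v ∈ L v := by
  obtain ⟨s, hsL, hs⟩ := combinatorial_nullstellensatz_exists_eval_nonzero (graphPoly H) d
    (mem_support_iff.1 hd)
    ((isHomogeneous_graphPoly hd).totalDegree (support_nonempty.1 ⟨d, hd⟩)) L hL
  exact ⟨.mk s fun {a b} ↦ eval_graphPoly_ne_zero_iff.1 hs a b, hsL⟩

theorem isChoosable_of_mem_graphExponents (hd : d ∈ graphExponents H) (hk : ∀ v, d v < k) :
    IsChoosable H k := by
  intro α L hL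
  obtain ⟨f, hf⟩ := Set.countable_iff_exists_injOn.1
    (Set.countable_iUnion fun v ↦ (L v).countable_toSet)
  have hinj (v : V) : Set.InjOn (fun c ↦ (f c : ℝ)) (L v) :=
    Nat.cast_injective.comp_injOn (hf.mono (Set.subset_iUnion (fun v ↦ (L v : Set α)) v))
  obtain ⟨C, hC⟩ := exists_coloring_real_of_mem_graphExponents hd
    (L := fun v ↦ (L v).image fun c ↦ (f c : ℝ))
    fun v ↦ by rw [card_image_of_injOn (hinj v)]; exact (hk v).trans_le (hL v)
  choose φ hφL hφ using fun v ↦ mem_image.1 (hC v)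
  exact ⟨.mk φ fun {a b} hab h ↦ C.valid hab (by rw [← hφ a, ← hφ b, h]), hφL⟩

end Choosability

section NicePair

variable {V : Type*} {G : SimpleGraph V}

lemma isMatching_sup_subgraphOfAdj {M : G.Subgraph} {a b : V}
    (hM : M.IsMatching) (hab : G.Adj a b) (ha : a ∉ M.verts) (hb : b ∉ M.verts) :
    (M ⊔ G.subgraphOfAdj hab).IsMatching := by
  refine hM.sup (.subgraphOfAdj hab) ?_
  rw [hM.support_eq_verts, SimpleGraph.support_subgraphOfAdj]
  grind

/-- The subgraph of `G` induced on `U`, without the edges of `M` and without those inside `K`. -/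
def residualGraph (G : SimpleGraph V) (U K : Finset V) (M : G.Subgraph) : SimpleGraph V where
  Adj a b := G.Adj a b ∧ ¬ M.Adj a b ∧ a ∈ U ∧ b ∈ U ∧ ¬ (a ∈ K ∧ b ∈ K)
  symm := ⟨fun _ _ ⟨h, hM, ha, hb, hK⟩ ↦ ⟨h.symm, mt .symm hM, hb, ha, mt And.symm hK⟩⟩

lemma residualGraph_adj {U K : Finset V} {M : G.Subgraph} {a b : V} :
    (residualGraph G U K M).Adj a b ↔ G.Adj a b ∧ ¬ M.Adj a b ∧ a ∈ U ∧ b ∈ U ∧ ¬ (a ∈ K ∧ b ∈ K) :=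
  Iff.rfl

lemma isIsolated_residualGraph {U K : Finset V} {M : G.Subgraph} {v : V} (hv : v ∉ U) :
    (residualGraph G U K M).IsIsolated v :=
  fun _ hadj ↦ hv (residualGraph_adj.1 hadj).2.2.1

lemma residualGraph_sup_of_separation [DecidableEq V] {U₁ U₂ K : Finset V} {M₁ M₂ : G.Subgraph}
    (hK : K ⊆ U₁) (hsep : ∀ a ∈ U₁, ∀ b ∈ U₂, G.Adj a b → a ∈ U₂ ∨ b ∈ U₁)
    (hM₁ : ∀ w ∈ M₁.verts, w ∈ U₁) (hM₂ : ∀ w ∈ M₂.verts, w ∉ U₁) :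
    residualGraph G (U₁ ∪ U₂) K (M₁ ⊔ M₂) =
      residualGraph G U₁ K M₁ ⊔ residualGraph G U₂ (U₁ ∩ U₂) M₂ := by
  ext a b
  have hadj₁ : M₁.Adj a b → a ∈ U₁ ∧ b ∈ U₁ := fun h ↦ ⟨hM₁ a h.fst_mem, hM₁ b h.snd_mem⟩
  have hadj₂ : M₂.Adj a b → a ∉ U₁ ∧ b ∉ U₁ := fun h ↦ ⟨hM₂ a h.fst_mem, hM₂ b h.snd_mem⟩
  have := hsep a
  have := hsep b
  simp only [residualGraph_adj, SimpleGraph.sup_adj, SimpleGraph.Subgraph.sup_adj]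
  grind [G.adj_comm]

variable [Fintype V] [LinearOrder V]

/-- A matching `M` of `G` within `U \ K` and an exponent `m` of the residual graph witness that the
part of `G` on `U` is nice relative to the precoloured clique `K` and the boundary `S`: exponents
are at most `3`, vanish on `K`, and on `S` they are at most `2`, even `1` at matched vertices. -/
structure IsNicePair (G : SimpleGraph V) (U : Finset V) (S : Set V) (K : Finset V)
    (M : G.Subgraph) (m : V →₀ ℕ) : Prop where
  isMatching : M.IsMatching
  mem_of_mem_verts : ∀ w ∈ M.verts, w ∈ U ∧ w ∉ K
  mem_graphExponents : m ∈ graphExponents (residualGraph G U K M)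
  apply_eq_zero : ∀ w ∈ K, m w = 0
  apply_le : ∀ w, m w ≤ 3 ∧ (w ∈ S → m w ≤ 2 ∧ (w ∈ M.verts → m w ≤ 1))

/-- The part of `G` on `U` is nice relative to `S` and `K` if it has a nice pair `(M, m)`. -/
def IsNice (G : SimpleGraph V) (U : Finset V) (S : Set V) (K : Finset V) : Prop :=
  ∃ M m, IsNicePair G U S K M m

variable {U K : Finset V} {S : Set V} {M : G.Subgraph} {m : V →₀ ℕ}

lemma IsNicePair.apply_eq_zero_of_notMem (h : IsNicePair G U S K M m) {w : V} (hw : w ∉ U) :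
    m w = 0 :=
  graphExponents_apply_eq_zero h.mem_graphExponents (isIsolated_residualGraph hw)

lemma IsNicePair.notMem_verts (h : IsNicePair G U S K M m) {w : V} (hw : w ∉ U) : w ∉ M.verts :=
  fun hM ↦ hw (h.mem_of_mem_verts w hM).1

namespace IsNice

lemma empty : IsNice G ∅ S ∅ := by
  refine ⟨⊥, 0, by simp [SimpleGraph.Subgraph.IsMatching], by simp, ?_, by simp, by simp⟩
  convert zero_mem_graphExponents_bot (V := V)
  ext
  simp [residualGraph_adj]

lemma mono {S' : Set V} (h : IsNice G U S K) (hS : ∀ w ∈ U, w ∈ S' → w ∈ S) :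
    IsNice G U S' K := by
  obtain ⟨M, m, h⟩ := h
  refine ⟨M, m, h.isMatching, h.mem_of_mem_verts, h.mem_graphExponents, h.apply_eq_zero,
    fun w ↦ ⟨(h.apply_le w).1, fun hw ↦ ?_⟩⟩
  by_cases hU : w ∈ U
  · exact (h.apply_le w).2 (hS w hU hw)
  · simp [h.apply_eq_zero_of_notMem hU]

lemma of_singleton {x : V} (h : IsNice G U S {x}) : IsNice G U S ∅ := by
  obtain ⟨M, m, h⟩ := h
  refine ⟨M, m, h.isMatching, fun w hw ↦ by simp [h.mem_of_mem_verts w hw], ?_, by simp, h.apply_le⟩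
  convert h.mem_graphExponents using 2
  ext a b
  have := G.ne_of_adj (a := a) (b := b)
  simp only [residualGraph_adj]
  grind

lemma of_pair {x y : V} (hxy : G.Adj x y) (hx : x ∈ U) (hy : y ∈ U) (h : IsNice G U S {x, y}) :
    IsNice G U S {x} := by
  obtain ⟨M, m, h⟩ := h
  have hyM : y ∉ M.verts := fun hM ↦ by simpa using (h.mem_of_mem_verts y hM).2
  have hm : m x = 0 ∧ m y = 0 := ⟨h.apply_eq_zero x (by simp), h.apply_eq_zero y (by simp)⟩
  have hres : residualGraph G U {x} M = residualGraph G U {x, y} M ⊔ SimpleGraph.edge y x := by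
    have hadj {w : V} : ¬ M.Adj y w ∧ ¬ M.Adj w y := ⟨fun h ↦ hyM h.fst_mem, fun h ↦ hyM h.snd_mem⟩
    ext a b
    have := G.ne_of_adj (a := a) (b := b)
    simp only [residualGraph_adj, SimpleGraph.sup_adj, SimpleGraph.edge_adj]
    grind [G.adj_comm]
  refine ⟨M, m + Finsupp.single y 1, h.isMatching, fun w hw ↦ ?_, ?_, ?_, ?_⟩
  · have := h.mem_of_mem_verts w hw
    grind
  · rw [hres]
    exact add_single_mem_graphExponents_sup_edge hxy.ne' (by simp [residualGraph_adj])
      h.mem_graphExponents hm.1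
  · simp [hm.1, hxy.ne']
  · intro w
    have := h.apply_le w
    simp only [Finsupp.add_apply, Finsupp.single_apply]
    grind

lemma of_erase_precoloured {x : V} (hxK : x ∈ K) (hxU : x ∈ U)
    (hS : ∀ w ∈ U, w ∈ S → G.Adj x w → w ∈ K)
    (h : IsNice G (U.erase x) (S ∪ G.neighborSet x) (K.erase x)) : IsNice G U S K := by
  classical
  obtain ⟨M, m, h⟩ := h
  have hxM : x ∉ M.verts := h.notMem_verts (notMem_erase x U)
  have hmx : m x = 0 := h.apply_eq_zero_of_notMem (notMem_erase x U)
  set N : Finset V := {w ∈ U | G.Adj x w ∧ w ∉ K}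
  have hres : residualGraph G U K M =
      residualGraph G (U.erase x) (K.erase x) M ⊔ starAt x N := by
    have hadj {w : V} : ¬ M.Adj x w ∧ ¬ M.Adj w x := ⟨fun h ↦ hxM h.fst_mem, fun h ↦ hxM h.snd_mem⟩
    ext a b
    have := G.ne_of_adj (a := a) (b := b)
    simp only [residualGraph_adj, SimpleGraph.sup_adj, starAt_adj]
    grind [G.adj_comm]
  have hiso : (residualGraph G (U.erase x) (K.erase x) M).IsIsolated x :=
    isIsolated_residualGraph (notMem_erase x U)
  refine ⟨M, m + ones N, h.isMatching, fun w hw ↦ ?_, ?_, ?_, ?_⟩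
  · have := h.mem_of_mem_verts w hw
    grind
  · rw [hres]
    exact add_ones_mem_graphExponents_sup_starAt hiso (by grind) h.mem_graphExponents
  all_goals
    intro w
    have := h.apply_eq_zero w
    have := h.apply_le w
    simp only [Finsupp.add_apply, ones_apply]
    grind [SimpleGraph.mem_neighborSet]

lemma of_separation {U₁ U₂ : Finset V} (hU : U = U₁ ∪ U₂) (hK : K ⊆ U₁)
    (hsep : ∀ a ∈ U₁, ∀ b ∈ U₂, G.Adj a b → a ∈ U₂ ∨ b ∈ U₁) (h₁ : IsNice G U₁ S K)
    (h₂ : IsNice G U₂ S (U₁ ∩ U₂)) : IsNice G U S K := by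
  obtain ⟨M₁, m₁, h₁⟩ := h₁
  obtain ⟨M₂, m₂, h₂⟩ := h₂
  have hM₁ := h₁.mem_of_mem_verts
  have hM₂ : ∀ w ∈ M₂.verts, w ∈ U₂ ∧ w ∉ U₁ := fun w hw ↦ by
    have := h₂.mem_of_mem_verts w hw
    grind
  have hm₂ : ∀ w ∈ U₁, m₂ w = 0 := fun w hw ↦ by
    by_cases hw₂ : w ∈ U₂
    · exact h₂.apply_eq_zero w (mem_inter_of_mem hw hw₂)
    · exact h₂.apply_eq_zero_of_notMem hw₂
  have hm₁ : ∀ w, w ∉ U₁ → m₁ w = 0 := fun w ↦ h₁.apply_eq_zero_of_notMem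
  have hdisj : Disjoint (residualGraph G U₁ K M₁) (residualGraph G U₂ (U₁ ∩ U₂) M₂) := by
    refine SimpleGraph.disjoint_left.2 fun a b ↦ ?_
    simp only [residualGraph_adj]
    grind
  refine ⟨M₁ ⊔ M₂, m₁ + m₂, h₁.isMatching.sup h₂.isMatching ?_, ?_, ?_, ?_, ?_⟩
  · rw [h₁.isMatching.support_eq_verts, h₂.isMatching.support_eq_verts]
    exact Set.disjoint_left.2 fun w hw₁ hw₂ ↦ (hM₂ w hw₂).2 (hM₁ w hw₁).1
  · rintro w (hw | hw) <;> grind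
  · rw [hU, residualGraph_sup_of_separation hK hsep (fun w hw ↦ (hM₁ w hw).1)
      fun w hw ↦ (hM₂ w hw).2]
    refine add_mem_graphExponents_sup hdisj h₁.mem_graphExponents h₂.mem_graphExponents ?_
    rintro v ⟨w, hadj⟩
    exact hm₂ v (residualGraph_adj.1 hadj).2.2.1
  all_goals
    intro w
    have := h₁.apply_eq_zero w
    have := h₁.apply_le w
    have := h₂.apply_le w
    have := hm₁ w
    have := hm₂ w
    simp only [Finsupp.add_apply, SimpleGraph.Subgraph.verts_sup, Set.mem_union]
    by_cases hw : w ∈ U₁ <;> grind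

end IsNice

lemma add_single_mem_graphExponents_residualGraph {v x : V} {F : Finset V} {M' : G.Subgraph}
    {e : V →₀ ℕ} (hvx : G.Adj v x) (hvU : v ∈ U) (hxU : x ∈ U) (hvK : v ∉ K)
    (hM : ∀ a b, a ≠ v → b ≠ v → (M'.Adj a b ↔ M.Adj a b)) (hx : ¬ M'.Adj v x)
    (hF : ∀ p, p ∈ F ↔ p ∈ U ∧ G.Adj v p ∧ ¬ M'.Adj v p ∧ p ≠ x)
    (he : e ∈ graphExponents (residualGraph G (U.erase v) K M ⊔ starAt v F)) (hex : e x = 0) :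
    e + Finsupp.single v 1 ∈ graphExponents (residualGraph G U K M') := by
  have hres : residualGraph G U K M' =
      residualGraph G (U.erase v) K M ⊔ starAt v F ⊔ SimpleGraph.edge v x := by
    ext a b
    have := G.ne_of_adj (a := a) (b := b)
    have := hM a b
    simp only [residualGraph_adj, SimpleGraph.sup_adj, SimpleGraph.edge_adj, starAt_adj, hF]
    grind [G.adj_comm, M'.adj_comm]
  rw [hres]
  refine add_single_mem_graphExponents_sup_edge hvx.ne ?_ he hex
  simp [residualGraph_adj, starAt_adj, hF, hvx.ne']

lemma IsNicePair.of_erase {v : V} {M' : G.Subgraph} {e : V →₀ ℕ}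
    (h : IsNicePair G (U.erase v) (S ∪ G.neighborSet v) K M m) (hKS : ↑K ⊆ S) (hvU : v ∈ U)
    (hvK : v ∉ K) (hM' : M'.IsMatching)
    (hverts : ∀ w ∈ M'.verts, w ∈ M.verts ∨ w = v ∨ w ∈ U ∧ w ∉ S)
    (he : e ∈ graphExponents (residualGraph G U K M'))
    (hv : e v ≤ 2 ∧ (v ∈ M'.verts → e v ≤ 1))
    (hne : ∀ w ≠ v, e w = m w ∨
      G.Adj v w ∧ w ∉ S ∧ e w ≤ m w + 2 ∧ (w ∉ M.verts → e w ≤ m w + 1)) :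
    IsNicePair G U S K M' e := by
  refine ⟨hM', fun w hw ↦ ?_, he, fun w hw ↦ ?_, fun w ↦ ?_⟩
  · have := h.mem_of_mem_verts w
    have := @hKS w
    grind
  · have := h.apply_eq_zero w
    have := @hKS w
    grind
  · rcases eq_or_ne w v with rfl | hwv
    · grind
    · have := h.apply_le w
      have := hne w hwv
      grind [SimpleGraph.mem_neighborSet]

lemma IsNice.of_erase_of_forall_eq {v x : V} (hKS : ↑K ⊆ S) (hvU : v ∈ U) (hvK : v ∉ K)
    (hxU : x ∈ U) (hxK : x ∈ K) (hvx : G.Adj v x) (hS : ∀ w ∈ U, w ∈ S → G.Adj v w → w = x)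
    (h : IsNice G (U.erase v) (S ∪ G.neighborSet v) K) : IsNice G U S K := by
  classical
  obtain ⟨M, m, h⟩ := h
  have hv : v ∉ U.erase v := notMem_erase v U
  have hvM : v ∉ M.verts := h.notMem_verts hv
  have hMadj {w : V} : ¬ M.Adj v w := fun hadj ↦ hvM hadj.fst_mem
  have hmv : m v = 0 := h.apply_eq_zero_of_notMem hv
  have hmx : m x = 0 := h.apply_eq_zero x hxK
  obtain ⟨N, hN⟩ : ∃ N : Finset V, ∀ w, w ∈ N ↔ w ∈ U ∧ G.Adj v w ∧ w ≠ x :=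
    ⟨{w ∈ U | G.Adj v w ∧ w ≠ x}, by simp⟩
  have hvN : v ∉ N := by simp [hN]
  have he := add_ones_mem_graphExponents_sup_starAt (isIsolated_residualGraph hv) hvN
    h.mem_graphExponents
  have hm := add_single_mem_graphExponents_residualGraph (M' := M) hvx hvU hxU hvK (by simp) hMadj
    (by simp [hN, hMadj]) he (by simp [hN, ones_apply, hmx])
  refine ⟨M, _, h.of_erase hKS hvU hvK h.isMatching (fun _ ↦ .inl) hm ?_ ?_⟩
  all_goals
    simp only [Finsupp.add_apply, Finsupp.single_apply, ones_apply]
    grind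

-- Unless the first monomial cancels, `v` gets exponent `1`; otherwise some neighbour `i ≠ u` of `v`
-- either takes up one more unit of exponent or gets matched to `v`.
lemma IsNice.of_erase_of_forall_eq_or_eq {v x u : V} (hKS : ↑K ⊆ S) (hvU : v ∈ U) (hvK : v ∉ K)
    (hxU : x ∈ U) (hxK : x ∈ K) (hvx : G.Adj v x) (hvu : G.Adj v u) (huU : u ∈ U)
    (hux : u ≠ x) (hS : ∀ w ∈ U, w ∈ S → G.Adj v w → w = x ∨ w = u)
    (h : IsNice G (U.erase v) (S ∪ G.neighborSet v) K) : IsNice G U S K := by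
  classical
  obtain ⟨M, m, h⟩ := h
  have hv : v ∉ U.erase v := notMem_erase v U
  have hvM : v ∉ M.verts := h.notMem_verts hv
  have hMadj {w : V} : ¬ M.Adj v w := fun hadj ↦ hvM hadj.fst_mem
  have hmv : m v = 0 := h.apply_eq_zero_of_notMem hv
  have hmx : m x = 0 := h.apply_eq_zero x hxK
  obtain ⟨N, hN⟩ : ∃ N : Finset V, ∀ w, w ∈ N ↔ w ∈ U ∧ G.Adj v w ∧ w ≠ x ∧ w ≠ u :=
    ⟨{w ∈ U | G.Adj v w ∧ w ≠ x ∧ w ≠ u}, by simp⟩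
  have hvN : v ∉ insert u N := by simp [hN, hvu.ne]
  have hF : ∀ p, p ∈ insert u N ↔ p ∈ U ∧ G.Adj v p ∧ ¬ M.Adj v p ∧ p ≠ x := by grind
  rcases exchange_graphExponents_sup_starAt (isIsolated_residualGraph hv) hvN
    (by simp [hN]) h.mem_graphExponents with he | ⟨i, hi, he, he'⟩
  · have hm := add_single_mem_graphExponents_residualGraph hvx hvU hxU hvK (by simp) hMadj hF he
      (by simp [hN, ones_apply, hmx, hvx.ne'])
    refine ⟨M, _, h.of_erase hKS hvU hvK h.isMatching (fun _ ↦ .inl) hm ?_ ?_⟩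
    all_goals
      simp only [Finsupp.add_apply, Finsupp.single_apply, ones_apply]
      grind
  obtain ⟨hiU, hvi, hix, hiu⟩ := (hN i).1 hi
  by_cases hiM : i ∈ M.verts
  · have hm := add_single_mem_graphExponents_residualGraph hvx hvU hxU hvK (by simp) hMadj hF he
      (by simp [hN, ones_apply, hmx, hix])
    refine ⟨M, _, h.of_erase hKS hvU hvK h.isMatching (fun _ ↦ .inl) hm ?_ ?_⟩
    all_goals
      simp only [Finsupp.add_apply, Finsupp.single_apply, ones_apply]
      grind
  · have hM'adj {a b : V} : (M ⊔ G.subgraphOfAdj hvi).Adj a b ↔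
        M.Adj a b ∨ (v = a ∧ i = b ∨ v = b ∧ i = a) := by simp
    have hm := add_single_mem_graphExponents_residualGraph (M' := M ⊔ G.subgraphOfAdj hvi)
      hvx hvU hxU hvK (by grind) (by grind) (by grind) he' (by simp [hN, ones_apply, hmx])
    refine ⟨_, _, h.of_erase hKS hvU hvK
      (isMatching_sup_subgraphOfAdj h.isMatching hvi hvM hiM) ?_ hm ?_ ?_⟩
    · grind [SimpleGraph.Subgraph.verts_sup, SimpleGraph.subgraphOfAdj_verts]
    all_goals
      simp only [Finsupp.add_apply, Finsupp.single_apply, ones_apply]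
      grind

end NicePair

section Minors

variable {V α β : Type*} {G : SimpleGraph V} {n : ℕ}

/-- The set of vertices with a neighbour in `Z`. -/
def nbhd (G : SimpleGraph V) (Z : Set V) : Set V :=
  {w | ∃ z ∈ Z, G.Adj z w}

lemma nbhd_union (Z Z' : Set V) : nbhd G (Z ∪ Z') = nbhd G Z ∪ nbhd G Z' := by
  ext
  simp only [nbhd, Set.mem_union, Set.mem_ofPred_eq, or_and_right, exists_or]

lemma nbhd_singleton (v : V) : nbhd G {v} = G.neighborSet v := by
  ext
  simp [nbhd]

lemma nbhd_insert (v : V) (Z : Set V) : nbhd G (insert v Z) = G.neighborSet v ∪ nbhd G Z := by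
  rw [Set.insert_eq, nbhd_union, nbhd_singleton]

lemma connected_induce_singleton (v : V) : (G.induce {v}).Connected :=
  ⟨.of_subsingleton⟩

lemma connected_induce_insert {v : V} {D : Set V} (hD : (G.induce D).Preconnected)
    (hv : D.Nonempty → v ∈ nbhd G D) : (G.induce (insert v D)).Connected := by
  rcases D.eq_empty_or_nonempty with rfl | hne
  · rw [insert_empty_eq]
    exact connected_induce_singleton v
  · obtain ⟨w, hw, hwv⟩ := hv hne
    have hpair := (G.induce_pair_connected_of_adj hwv.symm).preconnected
    have hunion := G.induce_union_connected hpair hD ⟨w, by simp, hw⟩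
    rwa [Set.insert_union, Set.singleton_union, Set.insert_eq_of_mem hw] at hunion

/-- A family of pairwise disjoint and pairwise adjacent connected vertex sets. -/
structure IsCliqueModel (G : SimpleGraph V) (f : α → Set V) : Prop where
  connected : ∀ i, (G.induce (f i)).Connected
  disjoint : Pairwise fun i j ↦ Disjoint (f i) (f j)
  adj : Pairwise fun i j ↦ ∃ a ∈ f i, ∃ b ∈ f j, G.Adj a b

lemma IsCliqueModel.isMinor {f : α → Set V} (hf : IsCliqueModel G f) :
    (SimpleGraph.completeGraph α).IsMinor G :=
  ⟨f, hf.connected, fun _ _ h ↦ hf.disjoint h, fun _ _ h ↦ hf.adj h.ne⟩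

lemma IsCliqueModel.cons {f : Fin n → Set V} {A : Set V} (hf : IsCliqueModel G f)
    (hA : (G.induce A).Connected) (hdisj : ∀ i, Disjoint A (f i))
    (hadj : ∀ i, ∃ b ∈ f i, b ∈ nbhd G A) :
    IsCliqueModel G (Fin.cons A f : Fin (n + 1) → Set V) where
  connected := Fin.cases hA hf.connected
  disjoint i j hij := by
    cases i using Fin.cases <;> cases j using Fin.cases
    · simp at hij
    · exact hdisj _
    · exact (hdisj _).symm
    · exact hf.disjoint (by simpa using hij)
  adj i j hij := by
    have hadj' i : ∃ a ∈ A, ∃ b ∈ f i, G.Adj a b :=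
      let ⟨b, hb, a, ha, hab⟩ := hadj i
      ⟨a, ha, b, hb, hab⟩
    cases i using Fin.cases with
    | zero => cases j using Fin.cases with
      | zero => simp at hij
      | succ j => exact hadj' j
    | succ i => cases j using Fin.cases with
      | zero =>
        obtain ⟨a, ha, b, hb, hab⟩ := hadj' i
        exact ⟨b, hb, a, ha, hab.symm⟩
      | succ j => exact hf.adj (by simpa using hij)

lemma isMinor_completeBipartiteGraph {f : α → Set V} {p : β → V} (hp : p.Injective)
    (hf : ∀ i, (G.induce (f i)).Connected) (hdisj : Pairwise fun i j ↦ Disjoint (f i) (f j))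
    (hpf : ∀ i j, p j ∉ f i) (hadj : ∀ i j, p j ∈ nbhd G (f i)) :
    (completeBipartiteGraph α β).IsMinor G := by
  refine ⟨Sum.elim f fun j ↦ {p j}, ?_, ?_, ?_⟩
  · rintro (i | j)
    exacts [hf i, connected_induce_singleton (p j)]
  · rintro (i | i) (j | j) hij
    · exact hdisj (by simpa using hij)
    · exact Set.disjoint_singleton_right.2 (hpf i j)
    · exact Set.disjoint_singleton_left.2 (hpf j i)
    · exact Set.disjoint_singleton.2 (hp.ne (by simpa using hij))
  · rintro (i | i) (j | j) hij
    · simp at hij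
    · obtain ⟨a, ha, hab⟩ := hadj i j
      exact ⟨a, ha, p j, rfl, hab⟩
    · obtain ⟨a, ha, hab⟩ := hadj j i
      exact ⟨p i, rfl, a, ha, hab.symm⟩
    · simp at hij

end Minors

section Links

lemma pairwise_fin_three {r : Fin 3 → Fin 3 → Prop} (hr : ∀ i j, r i j → r j i)
    (h : ∀ i, r i (i + 1)) : Pairwise r := by
  intro i j hij
  obtain rfl | rfl : j = i + 1 ∨ i = j + 1 := by lia
  exacts [h i, hr _ _ (h j)]

variable {V : Type*} {G : SimpleGraph V} {s t v : V} {D U W Z : Set V}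

/-- `D` is a connected set joining `s` to `t`; it may be empty if `s` and `t` are adjacent. -/
structure IsLink (G : SimpleGraph V) (s t : V) (D : Set V) : Prop where
  preconnected : (G.induce D).Preconnected
  mem_nbhd_left : D.Nonempty → s ∈ nbhd G D
  mem_nbhd_right : D.Nonempty → t ∈ nbhd G D
  adj : D = ∅ → G.Adj s t

lemma exists_isLink (hW : (G.induce W).Preconnected) (hs : s ∈ W) (ht : t ∈ W) (hst : s ≠ t) :
    ∃ D ⊆ W \ {s, t}, IsLink G s t D := by
  obtain ⟨p, hp, hpW⟩ : ∃ p : G.Walk s t, p.IsPath ∧ ∀ w ∈ p.support, w ∈ W := by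
    obtain ⟨q, hq⟩ := (hW ⟨s, hs⟩ ⟨t, ht⟩).exists_isPath
    have hinj : Function.Injective (SimpleGraph.Embedding.induce (G := G) W).toHom :=
      Subtype.val_injective
    have hqW : ∀ w ∈ (q.map (SimpleGraph.Embedding.induce W).toHom).support, w ∈ W := by
      intro w hw
      obtain ⟨y, -, rfl⟩ := List.mem_map.1 (SimpleGraph.Walk.support_map _ q ▸ hw)
      exact y.2
    exact ⟨_, hq.map hinj, hqW⟩
  cases p with
  | nil => exact absurd rfl hst
  | @cons _ w _ hsw q =>
    rw [SimpleGraph.Walk.cons_isPath_iff] at hp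
    by_cases hq : q.Nil
    · obtain rfl := hq.eq
      exact ⟨∅, by simp, .of_subsingleton, by simp, by simp, fun _ ↦ hsw⟩
    have hsupp := SimpleGraph.Walk.support_dropLast_concat hq
    have hnodup : t ∉ q.dropLast.support := by
      have := hp.1.support_nodup
      rw [← hsupp] at this
      grind
    refine ⟨{y | y ∈ q.dropLast.support}, ?_, q.dropLast.connected_induce_support.preconnected,
      fun _ ↦ ⟨w, q.dropLast.start_mem_support, hsw.symm⟩,
      fun _ ↦ ⟨_, q.dropLast.end_mem_support, q.adj_penultimate hq⟩, fun h ↦ ?_⟩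
    · intro y (hy : y ∈ q.dropLast.support)
      have hyq : y ∈ q.support := by simp [← hsupp, hy]
      have := hpW y (by simp [hyq])
      grind
    · exact absurd q.dropLast.start_mem_support (Set.eq_empty_iff_forall_notMem.1 h w)

lemma IsLink.connected_insert (h : IsLink G s t D) : (G.induce (insert s D)).Connected :=
  connected_induce_insert h.preconnected h.mem_nbhd_left

lemma IsLink.exists_adj_insert_insert (h : IsLink G s t D) (E : Set V) :
    ∃ a ∈ insert s D, ∃ b ∈ insert t E, G.Adj a b := by
  rcases D.eq_empty_or_nonempty with hD | hD
  · exact ⟨s, by simp, t, by simp, h.adj hD⟩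
  · obtain ⟨w, hw, hwt⟩ := h.mem_nbhd_right hD
    exact ⟨w, by simp [hw], t, by simp, hwt⟩

variable {p : Fin 3 → V} {D : Fin 3 → Set V}

lemma isCliqueModel_of_isLink (hp : p.Injective) (hD : ∀ i, IsLink G (p i) (p (i + 1)) (D i))
    (hpD : ∀ i j, p i ∉ D j) (hdisj : ∀ i, Disjoint (D i) (D (i + 1))) :
    IsCliqueModel G fun i ↦ insert (p i) (D i) where
  connected i := (hD i).connected_insert
  disjoint := by
    refine pairwise_fin_three (fun _ _ h ↦ h.symm) fun i ↦ ?_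
    have hne : p (i + 1) ≠ p i := hp.ne (by simp)
    simp [Set.disjoint_insert_left, hne, hpD, hdisj i]
  adj := by
    refine pairwise_fin_three (fun i j ⟨a, ha, b, hb, hab⟩ ↦ ⟨b, hb, a, ha, hab.symm⟩) fun i ↦ ?_
    exact (hD i).exists_adj_insert_insert _

lemma IsLink.mem_nbhd_union (hD : ∀ i, IsLink G (p i) (p (i + 1)) (D i)) {i : Fin 3}
    (h₁ : (D i).Nonempty) (h₂ : (D (i + 1)).Nonempty) (j : Fin 3) :
    p j ∈ nbhd G (D i ∪ D (i + 1)) := by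
  rw [nbhd_union]
  obtain rfl | rfl | rfl : j = i ∨ j = i + 1 ∨ j = i + 1 + 1 := by lia
  exacts [.inl ((hD _).mem_nbhd_left h₁), .inl ((hD _).mem_nbhd_right h₁),
    .inr ((hD _).mem_nbhd_right h₂)]

-- Link each pair of the `p i` avoiding the third one. If two links meet, then their union together
-- with `v` and `Z` forms a `K₃,₃` minor; if not, they complete `v` and `Z` to a `K₅` minor.
lemma not_isPlanar_of_three_common_neighbors (hZ : (G.induce Z).Connected) (hZU : Disjoint Z U)
    (hvU : v ∈ U) (hvZ : v ∈ nbhd G Z) (hp : p.Injective) (hpU : ∀ i, p i ∈ U)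
    (hpZ : ∀ i, p i ∈ nbhd G Z) (hvp : ∀ i, G.Adj v (p i))
    (hconn : ∀ i, (G.induce (U \ {v, p i})).Preconnected) : ¬ G.IsPlanar := by
  have hlink i : ∃ D ⊆ (U \ {v, p (i + 2)}) \ {p i, p (i + 1)}, IsLink G (p i) (p (i + 1)) D :=
    exists_isLink (hconn _) (by simp [hpU, (hvp i).ne', hp.eq_iff])
      (by simp [hpU, (hvp _).ne', hp.eq_iff]) (hp.ne (by simp))
  choose D hDU hD using hlink
  have hvZ' : v ∉ Z := hZU.notMem_of_mem_right hvU
  have hpZ' j : p j ∉ Z := hZU.notMem_of_mem_right (hpU j)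
  have hvD i : v ∉ D i := fun h ↦ by simpa using hDU i h
  have hpD j i : p j ∉ D i := fun h ↦ by
    obtain rfl | rfl | rfl : j = i ∨ j = i + 1 ∨ j = i + 2 := by lia
    all_goals simpa using hDU _ h
  have hZD i : Disjoint Z (D i) := hZU.mono_right fun w hw ↦ (hDU i hw).1.1
  rintro ⟨hK5, hK33⟩
  have hdisj i : Disjoint (D i) (D (i + 1)) := by
    by_contra hmeet
    obtain ⟨w, hw, hw'⟩ := Set.not_disjoint_iff.1 hmeet
    refine hK33 (isMinor_completeBipartiteGraph (f := ![D i ∪ D (i + 1), {v}, Z]) hp ?_ ?_ ?_ ?_)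
    · simp [Fin.forall_fin_succ, hZ,
        G.induce_union_connected (hD i).preconnected (hD (i + 1)).preconnected ⟨w, hw, hw'⟩]
    · refine pairwise_fin_three (fun _ _ h ↦ h.symm) ?_
      simp [Fin.forall_fin_succ, hvD, hvZ', hZD]
    · simp [Fin.forall_fin_succ, hpD, hpZ', (hvp _).ne']
    · simpa [Fin.forall_fin_succ, nbhd_singleton, hvp, hpZ] using
        IsLink.mem_nbhd_union hD ⟨w, hw⟩ ⟨w, hw'⟩
  have hmodel := (isCliqueModel_of_isLink hp hD hpD hdisj).cons (connected_induce_singleton v)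
    (by simp [hvD, (hvp _).ne]) fun i ↦ ⟨p i, by simp, by simp [nbhd_singleton, hvp]⟩
  exact hK5 (hmodel.cons hZ (by simp [Fin.forall_fin_succ, hvZ', hpZ', hZD])
    (by simp [Fin.forall_fin_succ, hvZ, hpZ])).isMinor

end Links

section Regions

variable {V : Type*} {G : SimpleGraph V} {U U' K : Finset V} {Z : Set V} {v x y : V}

lemma exists_closed_of_not_preconnected {W : Finset V} (hW : ¬ (G.induce (W : Set V)).Preconnected)
    {C : Set V} (hC : G.IsClique C) :
    ∃ A ⊂ W, A.Nonempty ∧ (∀ a ∈ A, ∀ b ∈ W, G.Adj a b → b ∈ A) ∧ ∀ c ∈ C, c ∈ W → c ∈ A := by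
  classical
  obtain ⟨x, hxC⟩ : ∃ x : (W : Set V), ∀ c : (W : Set V), c.1 ∈ C →
      (G.induce (W : Set V)).Reachable x c := by
    by_cases hCW : ∃ x : (W : Set V), x.1 ∈ C
    · obtain ⟨x, hx⟩ := hCW
      refine ⟨x, fun c hc ↦ ?_⟩
      by_cases hxc : x = c
      · exact hxc ▸ .refl x
      · exact SimpleGraph.Adj.reachable (hC hx hc (Subtype.coe_ne_coe.2 hxc))
    · obtain ⟨x, -⟩ := not_forall.1 hW
      exact ⟨x, fun c hc ↦ absurd ⟨c, hc⟩ hCW⟩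
  obtain ⟨y, hxy⟩ : ∃ y, ¬ (G.induce (W : Set V)).Reachable x y := by
    by_contra! hx
    exact hW fun a b ↦ (hx a).symm.trans (hx b)
  let A := W.filter fun w ↦ ∃ hw : w ∈ W, (G.induce (W : Set V)).Reachable x ⟨w, hw⟩
  have hA {w : V} (hw : w ∈ W) : w ∈ A ↔ (G.induce (W : Set V)).Reachable x ⟨w, hw⟩ := by
    simp [A, hw]
  refine ⟨A, (ssubset_iff_of_subset (filter_subset _ _)).2 ⟨y, y.2, (hA y.2).not.2 hxy⟩,
    ⟨x, (hA x.2).2 (.refl x)⟩, fun a ha b hb hab ↦ ?_, fun c hcC hc ↦ (hA hc).2 (hxC _ hcC)⟩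
  have haW : a ∈ W := mem_of_mem_filter a ha
  have hstep : (G.induce (W : Set V)).Adj ⟨a, haW⟩ ⟨b, hb⟩ := hab
  exact (hA hb).2 (((hA haW).1 ha).trans hstep.reachable)

/-- The situation met in the induction: `Z` is the connected part of the graph removed so far, `U`
is a set of remaining vertices, and `K` is the set of ends of the precoloured vertex or edge on the
boundary of `Z`, or empty. -/
structure IsRegion (G : SimpleGraph V) (U : Finset V) (Z : Set V) (K : Finset V) : Prop where
  preconnected : (G.induce Z).Preconnected
  disjoint : Disjoint Z (U : Set V)
  subset : K ⊆ U
  subset_nbhd : (K : Set V) ⊆ nbhd G Z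
  card_le_two : #K ≤ 2
  isClique : G.IsClique (K : Set V)

lemma IsRegion.restrict (h : IsRegion G U Z K) (hU : U' ⊆ U) (hK : K ⊆ U') :
    IsRegion G U' Z K :=
  { h with
    disjoint := h.disjoint.mono_right (coe_subset.2 hU)
    subset := hK }

lemma IsRegion.singleton (h : IsRegion G U Z K) (hxU : x ∈ U) (hxZ : x ∈ nbhd G Z) :
    IsRegion G U Z {x} :=
  { h with
    subset := by simpa
    subset_nbhd := by simpa
    card_le_two := by simp
    isClique := by simp }

lemma isRegion_singleton_empty (hv : v ∉ U) : IsRegion G U {v} ∅ where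
  preconnected := (connected_induce_singleton v).preconnected
  disjoint := by simpa
  subset := empty_subset U
  subset_nbhd := by simp
  card_le_two := by simp
  isClique := by simp

variable [DecidableEq V]

lemma IsRegion.erase (h : IsRegion G U Z K) (hvZ : v ∈ nbhd G Z) :
    IsRegion G (U.erase v) (insert v Z) (K.erase v) where
  preconnected := (connected_induce_insert h.preconnected fun _ ↦ hvZ).preconnected
  disjoint := by
    rw [coe_erase, Set.disjoint_insert_left]
    exact ⟨by simp, h.disjoint.mono_right Set.sdiff_subset⟩
  subset := erase_subset_erase v h.subset
  subset_nbhd := by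
    rw [nbhd_insert]
    exact (coe_subset.2 (erase_subset v K)).trans (h.subset_nbhd.trans Set.subset_union_right)
  card_le_two := card_erase_le.trans h.card_le_two
  isClique := h.isClique.subset (coe_subset.2 (erase_subset v K))

lemma IsRegion.pair (h : IsRegion G U Z K) (hxU : x ∈ U) (hxZ : x ∈ nbhd G Z) (hyU : y ∈ U)
    (hyZ : y ∈ nbhd G Z) (hxy : G.Adj x y) : IsRegion G U Z {x, y} :=
  { h with
    subset := by simp [insert_subset_iff, hxU, hyU]
    subset_nbhd := by simp [Set.insert_subset_iff, hxZ, hyZ]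
    card_le_two := Finset.card_le_two
    isClique := by simp [hxy] }

/-- No precoloured vertex or edge on the boundary separates the region. -/
def IsUnseparated (G : SimpleGraph V) (U : Finset V) (Z : Set V) : Prop :=
  ∀ Y, IsRegion G U Z Y → (G.induce ((U \ Y : Finset V) : Set V)).Preconnected

lemma IsRegion.boundary_neighbors_le_two (hG : G.IsPlanar) (h : IsRegion G U Z K)
    (hsep : IsUnseparated G U Z) (hvU : v ∈ U) (hvZ : v ∈ nbhd G Z) (hxU : x ∈ U)
    (hxZ : x ∈ nbhd G Z) (hvx : G.Adj v x) :
    (∀ w ∈ U, w ∈ nbhd G Z → G.Adj v w → w = x) ∨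
      ∃ u ∈ U, G.Adj v u ∧ u ≠ x ∧ ∀ w ∈ U, w ∈ nbhd G Z → G.Adj v w → w = x ∨ w = u := by
  by_contra! hcon
  obtain ⟨⟨u, huU, huZ, hvu, hux⟩, hcon⟩ := hcon
  obtain ⟨w, hwU, hwZ, hvw, hwx, hwu⟩ := hcon u huU hvu hux
  have hZ : (G.induce Z).Connected := by
    obtain ⟨z, hz, -⟩ := hvZ
    exact (SimpleGraph.connected_iff _).2 ⟨h.preconnected, ⟨z, hz⟩⟩
  refine not_isPlanar_of_three_common_neighbors (p := ![x, u, w]) hZ h.disjoint hvU hvZ ?_ ?_ ?_ ?_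
    ?_ hG
  · simp [Function.Injective, Fin.forall_fin_succ, hux, hux.symm, hwx, hwx.symm, hwu, hwu.symm]
  all_goals simp only [Fin.forall_fin_succ]
  · simp [hxU, huU, hwU]
  · simp [hxZ, huZ, hwZ]
  · simp [hvx, hvu, hvw]
  · have hpair {q : V} (hqU : q ∈ U) (hqZ : q ∈ nbhd G Z) (hvq : G.Adj v q) :
        (G.induce ((U : Set V) \ {v, q})).Preconnected := by
      have hq := hsep _ (h.pair hvU hvZ hqU hqZ hvq)
      rwa [coe_sdiff, coe_pair] at hq
    simp [*]

end Regions

section Induction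

variable {V : Type*} [Fintype V] [LinearOrder V] {G : SimpleGraph V} {U K Y : Finset V}
  {Z : Set V} {x y : V}

/-- Every region on the vertex set `U` is nice: the induction statement. -/
def RegionsAreNice (G : SimpleGraph V) (U : Finset V) : Prop :=
  ∀ Z K, IsRegion G U Z K → IsNice G U (nbhd G Z) K

lemma IsRegion.isNice_of_not_preconnected (ih : ∀ U' ⊂ U, RegionsAreNice G U')
    (h : IsRegion G U Z K) (hY : IsRegion G U Z Y)
    (hUY : ¬ (G.induce ((U \ Y : Finset V) : Set V)).Preconnected) :
    IsNice G U (nbhd G Z) K := by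
  obtain ⟨A, hA, ⟨a, ha⟩, hclosed, hKA⟩ := exists_closed_of_not_preconnected hUY h.isClique
  have hAU := hA.subset
  obtain ⟨b, hb, hbA⟩ := exists_of_ssubset hA
  have hYU := hY.subset
  have hKU := h.subset
  have hAY : IsRegion G (A ∪ Y) Z K := h.restrict (by grind) (by grind)
  have hUA : IsRegion G (U \ A) Z Y := hY.restrict sdiff_subset (by grind)
  have hinter : (A ∪ Y) ∩ (U \ A) = Y := by grind
  refine IsNice.of_separation (U₁ := A ∪ Y) (U₂ := U \ A) (by grind) hAY.subset (by grind)
    (ih _ ?_ Z K hAY) ?_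
  · exact (ssubset_iff_of_subset (by grind)).2 ⟨b, by grind, by grind⟩
  · rw [hinter]
    exact ih _ (sdiff_ssubset (by grind) ⟨a, ha⟩) Z Y hUA

lemma IsRegion.isNice_of_forall_mem (ih : ∀ U' ⊂ U, RegionsAreNice G U') (h : IsRegion G U Z K)
    (hxK : x ∈ K) (hx : ∀ w ∈ U, w ∈ nbhd G Z → G.Adj x w → w ∈ K) :
    IsNice G U (nbhd G Z) K := by
  have hxU := h.subset hxK
  have herase := ih _ (erase_ssubset hxU) _ _ (h.erase (h.subset_nbhd hxK))
  rw [nbhd_insert, Set.union_comm] at herase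
  exact herase.of_erase_precoloured hxK hxU hx

lemma IsRegion.isNice_pair (hG : G.IsPlanar) (ih : ∀ U' ⊂ U, RegionsAreNice G U')
    (hsep : IsUnseparated G U Z) (h : IsRegion G U Z {x, y}) :
    IsNice G U (nbhd G Z) {x, y} := by
  have hxU : x ∈ U := h.subset (by simp)
  have hxZ : x ∈ nbhd G Z := h.subset_nbhd (by simp)
  by_cases hv : ∃ v ∈ U, v ∈ nbhd G Z ∧ G.Adj v x ∧ v ≠ y
  · obtain ⟨v, hvU, hvZ, hvx, hvy⟩ := hv
    have hvK : v ∉ ({x, y} : Finset V) := by simp [hvx.ne, hvy]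
    have herase := ih _ (erase_ssubset hvU) _ _ (h.erase hvZ)
    rw [nbhd_insert, Set.union_comm, erase_eq_of_notMem hvK] at herase
    rcases h.boundary_neighbors_le_two hG hsep hvU hvZ hxU hxZ hvx with hv | ⟨u, huU, hvu, hux, hv⟩
    · exact herase.of_erase_of_forall_eq h.subset_nbhd hvU hvK hxU (by simp) hvx hv
    · exact herase.of_erase_of_forall_eq_or_eq h.subset_nbhd hvU hvK hxU (by simp) hvx hvu huU hux
        hv
  · refine h.isNice_of_forall_mem ih (mem_insert_self x _) fun w hwU hwZ hxw ↦ ?_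
    by_contra hw
    exact hv ⟨w, hwU, hwZ, hxw.symm, by grind⟩

lemma IsRegion.isNice_singleton (hG : G.IsPlanar) (ih : ∀ U' ⊂ U, RegionsAreNice G U')
    (hsep : IsUnseparated G U Z) (h : IsRegion G U Z {x}) : IsNice G U (nbhd G Z) {x} := by
  have hxU : x ∈ U := h.subset (by simp)
  have hxZ : x ∈ nbhd G Z := h.subset_nbhd (by simp)
  by_cases hy : ∃ y ∈ U, y ∈ nbhd G Z ∧ G.Adj x y
  · obtain ⟨y, hyU, hyZ, hxy⟩ := hy
    exact ((h.pair hxU hxZ hyU hyZ hxy).isNice_pair hG ih hsep).of_pair hxy hxU hyU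
  · exact h.isNice_of_forall_mem ih (mem_singleton_self x) fun w hwU hwZ hxw ↦
      absurd ⟨w, hwU, hwZ, hxw⟩ hy

lemma isNice_of_forall_notMem (ih : ∀ U' ⊂ U, RegionsAreNice G U') {S : Set V}
    (hS : ∀ w ∈ U, w ∉ S) : IsNice G U S ∅ := by
  rcases U.eq_empty_or_nonempty with rfl | ⟨p, hp⟩
  · exact .empty
  have herase := ih _ (erase_ssubset hp) _ _ (isRegion_singleton_empty (notMem_erase p U))
  rw [nbhd_singleton, ← Set.empty_union (G.neighborSet p), ← erase_singleton p] at herase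
  have hprecoloured : IsNice G U ∅ {p} := herase.of_erase_precoloured (by simp) hp (by simp)
  exact hprecoloured.of_singleton.mono fun w hwU hwS ↦ absurd hwS (hS w hwU)

lemma regionsAreNice (hG : G.IsPlanar) (U : Finset V) : RegionsAreNice G U := by
  induction U using Finset.strongInduction with
  | H U ih =>
    intro Z K h
    by_cases hsep : IsUnseparated G U Z
    · have hcard : #K = 0 ∨ #K = 1 ∨ #K = 2 := by have := h.card_le_two; lia
      simp only [card_eq_zero, card_eq_one, card_eq_two] at hcard
      obtain rfl | ⟨x, rfl⟩ | ⟨x, y, -, rfl⟩ := hcard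
      · by_cases hx : ∃ x ∈ U, x ∈ nbhd G Z
        · obtain ⟨x, hxU, hxZ⟩ := hx
          exact ((h.singleton hxU hxZ).isNice_singleton hG ih hsep).of_singleton
        · exact isNice_of_forall_notMem ih fun w hwU hwZ ↦ hx ⟨w, hwU, hwZ⟩
      · exact h.isNice_singleton hG ih hsep
      · exact h.isNice_pair hG ih hsep
    · obtain ⟨Y, hY, hUY⟩ : ∃ Y, IsRegion G U Z Y ∧
          ¬ (G.induce ((U \ Y : Finset V) : Set V)).Preconnected := by
        simpa only [IsUnseparated, not_forall, exists_prop] using hsep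
      exact h.isNice_of_not_preconnected ih hY hUY

end Induction

lemma exists_isMatching_graphExponents {V : Type*} [Fintype V] [LinearOrder V] {G : SimpleGraph V}
    (hG : G.IsPlanar) : ∃ M : G.Subgraph, M.IsMatching ∧
      ∃ m ∈ graphExponents (G.deleteEdges M.edgeSet), ∀ v, m v ≤ 3 := by
  have hregion : IsRegion G univ ∅ ∅ :=
    { preconnected := .of_subsingleton
      disjoint := by simp
      subset := by simp
      subset_nbhd := by simp
      card_le_two := by simp
      isClique := by simp }
  obtain ⟨M, m, h⟩ := regionsAreNice hG univ ∅ ∅ hregion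
  have hdelete : residualGraph G univ ∅ M = G.deleteEdges M.edgeSet := by
    ext a b
    simp [residualGraph_adj]
  exact ⟨M, h.isMatching, m, hdelete ▸ h.mem_graphExponents, fun v ↦ (h.apply_le v).1⟩

theorem exists_isMatching_isChoosable_deleteEdges {V : Type*} [Finite V] {G : SimpleGraph V}
    (hG : G.IsPlanar) :
    ∃ M : G.Subgraph, M.IsMatching ∧ IsChoosable (G.deleteEdges M.edgeSet) 4 := by
  have := Fintype.ofFinite V
  let _ : LinearOrder V := IsWellOrder.linearOrder WellOrderingRel
  obtain ⟨M, hM, m, hm, hm3⟩ := exists_isMatching_graphExponents hG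
  exact ⟨M, hM, isChoosable_of_mem_graphExponents hm fun v ↦ Nat.lt_succ_of_le (hm3 v)⟩

theorem stmt_12_general {V α : Type*} [Finite V] {G : SimpleGraph V} (hG : G.IsPlanar)
    (L : V → Finset α) (hL : ∀ v, 4 ≤ #(L v)) :
    ∃ φ : V → α, (∀ v, φ v ∈ L v) ∧ ∀ v, {u | G.Adj v u ∧ φ u = φ v}.Subsingleton := by
  obtain ⟨M, hM, hchoosable⟩ := exists_isMatching_isChoosable_deleteEdges hG
  obtain ⟨φ, hφL⟩ := hchoosable α L hL
  have hmatched {v w : V} (hvw : G.Adj v w) (hφvw : φ w = φ v) : M.Adj v w := by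
    by_contra hnot
    exact φ.valid (by simp [hvw, hnot]) hφvw.symm
  exact ⟨φ, hφL, fun v u hu w hw ↦ hM.eq_of_adj_left (hmatched hu.1 hu.2) (hmatched hw.1 hw.2)⟩

/- Every planar graph is 1-defective 4-choosable: from any lists of size 4 there is a
colouring in which every colour class induces a subgraph of maximum degree at most 1. -/
theorem stmt_12 {V : Type*} [Fintype V] [LinearOrder V] (G : SimpleGraph V)
    (hG : G.IsPlanar)
    (L : V → Finset ℕ) (hL : ∀ v, (L v).card = 4) :
    ∃ φ : V → ℕ, (∀ v, φ v ∈ L v) ∧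
      ∀ v, {u | G.Adj v u ∧ φ u = φ v}.Subsingleton := by
  exact stmt_12_general hG L fun v ↦ (hL v).ge
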